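/- Let m > 1 be a positive integer and let f ∈ 𝒪(ℂ²,0,0). Assume that the origin is an isolated fixed point of f and that, for each eigenvalue λ of Df(0), either λ = 1 or λ^m ≠ 1. Then the origin is an isolated fixed point of f^m and μ_f(0) = μ_{f^m}(0). -/

import Mathlib

open Metric Set Filter Topology Polynomial Asymptotics
open scoped Classical

noncomputable section

namespace ZhangPaper

/-- `ℂⁿ`. -/
abbrev Cn (n : ℕ) := Fin n → ℂ

variable {n : ℕ}

/-- A germ in `𝒪(ℂⁿ,0,0)`: holomorphic near `0` and fixing the origin. -/
def IsGerm (f : Cn n → Cn n) : Prop := AnalyticAt ℂ f 0 ∧ f 0 = 0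

/-- `q` is a regular value of `h` on `s`. -/
def IsRegularValueOn (h : Cn n → Cn n) (s : Set (Cn n)) (q : Cn n) : Prop :=
  ∀ x ∈ s, h x = q → Function.Bijective (fderiv ℂ h x)

/-- `m` is the zero order (multiplicity) of `h` at the isolated zero `p`:
the number of solutions of `h x = q` near `p`, for any regular value `q`
with `‖q‖` sufficiently small. -/
def HasZeroOrder (h : Cn n → Cn n) (p : Cn n) (m : ℕ) : Prop :=
  ∃ r > 0, AnalyticOnNhd ℂ h (closedBall p r) ∧ h p = 0 ∧
    (∀ x ∈ closedBall p r, h x = 0 → x = p) ∧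
    (∀ ε > 0, ∃ q : Cn n, ‖q‖ < ε ∧ IsRegularValueOn h (ball p r) q) ∧
    ∃ δ > 0, ∀ q : Cn n, ‖q‖ < δ → IsRegularValueOn h (ball p r) q →
      {x ∈ ball p r | h x = q}.ncard = m

/-- The zero order `π_h(p)` of `h` at `p`. -/
def zeroOrder (h : Cn n → Cn n) (p : Cn n) : ℕ := sInf {m | HasZeroOrder h p m}

/-- The fixed point index `μ_g(p)` of `g` at `p`. -/
def fixedPointIndex (g : Cn n → Cn n) (p : Cn n) : ℕ :=
  zeroOrder (fun x => x - g x) p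

/-- The local Dold index `P_M(f,0)`. -/
def doldIndex (f : Cn n → Cn n) (M : ℕ) : ℤ :=
  ∑ τ ∈ M.primeFactors.powerset,
    (-1 : ℤ) ^ τ.card * (fixedPointIndex (f^[M / (∏ p ∈ τ, p)]) 0 : ℤ)

/-- `x` is a periodic point of exact period `M` for `g`. -/
def ExactPeriodicPt (g : Cn n → Cn n) (M : ℕ) (x : Cn n) : Prop :=
  g^[M] x = x ∧ ∀ j, 0 < j → j < M → g^[j] x ≠ x

/-- `g` has at least `m` distinct periodic orbits of period `M` inside `B`. -/
def AtLeastOrbits (g : Cn n → Cn n) (M m : ℕ) (B : Set (Cn n)) : Prop :=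
  ∃ p : Fin m → Cn n,
    (∀ i, ExactPeriodicPt g M (p i) ∧ ∀ j < M, g^[j] (p i) ∈ B) ∧
    ∀ i j : Fin m, i ≠ j → ∀ l < M, g^[l] (p i) ≠ p j

/-- `g` has exactly `m` distinct periodic orbits of period `M` inside `B`. -/
def ExactlyOrbits (g : Cn n → Cn n) (M m : ℕ) (B : Set (Cn n)) : Prop :=
  AtLeastOrbits g M m B ∧ ¬ AtLeastOrbits g M (m + 1) B

/-- The number `𝒪_M(f,0)` of periodic orbits of period `M` of `f` hidden at the
fixed point `0`: the largest `m` such that there is a ball `B` centered at `0` in which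
`0` is the only fixed point of `f^M`, and a sequence of holomorphic maps fixing `0`
converging to `f` uniformly on `B`, each having `m` distinct periodic orbits of
period `M` in `B`. -/
def hiddenOrbits (f : Cn n → Cn n) (M : ℕ) : ℕ :=
  sSup {m | ∃ r > 0,
    (∀ x ∈ closedBall (0 : Cn n) r, f^[M] x = x → x = 0) ∧
    ∃ fk : ℕ → Cn n → Cn n,
      (∀ k, AnalyticOnNhd ℂ (fk k) (ball (0 : Cn n) r) ∧ fk k 0 = 0) ∧
      TendstoUniformlyOn fk f atTop (ball (0 : Cn n) r) ∧
      ∀ k, AtLeastOrbits (fk k) M m (ball (0 : Cn n) r)}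

/-- `0` is an isolated fixed point of `g`. -/
def IsolatedFixedPtAt0 (g : Cn n → Cn n) : Prop :=
  g 0 = 0 ∧ ∀ᶠ x in 𝓝[≠] (0 : Cn n), g x ≠ x

/-- `0` is an isolated zero of `h`. -/
def IsolatedZeroAt0 (h : Cn n → Cn n) : Prop :=
  h 0 = 0 ∧ ∀ᶠ x in 𝓝[≠] (0 : Cn n), h x ≠ 0

/-- `p` is a simple fixed point of `g`: `Dg(p)` has no eigenvalue `1`. -/
def SimpleFixedPt (g : Cn n → Cn n) (p : Cn n) : Prop :=
  g p = p ∧ ¬ Module.End.HasEigenvalue ((fderiv ℂ g p).toLinearMap) 1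

/-- The global fixed point index `L(g)` of `g` over `U`: the sum of the fixed point
indices at all fixed points of `g` in `U`. -/
def globalIndex (g : Cn n → Cn n) (U : Set (Cn n)) : ℤ :=
  ∑ᶠ p ∈ {x ∈ U | g x = x}, (fixedPointIndex g p : ℤ)

/-- The global Dold index `P_M(f)` over `U`. -/
def globalDold (f : Cn n → Cn n) (M : ℕ) (U : Set (Cn n)) : ℤ :=
  ∑ τ ∈ M.primeFactors.powerset,
    (-1 : ℤ) ^ τ.card * globalIndex (f^[M / (∏ p ∈ τ, p)]) U

/-! Writing `A` for `Df(0)` and telescoping `id - f^m = ∑_{j<m} (f^j - f^j ∘ f)` gives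
`id - f^m = (∑_{j<m} A^j) (id - f) + o(id - f)`, and the eigenvalue condition says precisely that
`B = ∑_{j<m} A^j` is invertible. Hence `id - f^m` and `B ∘ (id - f)` are asymptotically equivalent
at `0`. Zero orders are invariant under composition with `B` and, by Rouché's theorem in several
variables, under asymptotic equivalence.

Rouché's theorem is obtained without degree theory. Along `F (s, ·) = f + s (g - f)`, consider the
`k`-tuples of zeros of `F (s, ·)` and weigh each by the product of its absolute Jacobians and of its
absolute pairwise differences. The largest weight `M s` is upper semicontinuous, and wherever it is
positive the implicit function theorem bounds it below by the absolute value of a holomorphic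
function touching it at `s`. A Schwarz lemma argument then yields an identity principle: if `M`
vanishes on an open set, it vanishes everywhere. So if `F (0, ·)` has only nondegenerate zeros, and
fewer than `k` of them, then `F (1, ·)` cannot have `k` nondegenerate zeros either. -/

section HolomorphicMinorants

variable {u v : ℂ → ℝ} {z : ℂ}

/-- `u` is locally bounded below near `z` by the modulus of a holomorphic function that agrees with
`u` at `z`. This is the form of (logarithmic) subharmonicity that yields the maximum principle; it
is satisfied by suprema of moduli of holomorphic functions, where they are attained. -/
def HasHolomorphicMinorantAt (u : ℂ → ℝ) (z : ℂ) : Prop :=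
  ∃ φ : ℂ → ℂ, AnalyticAt ℂ φ z ∧ ‖φ z‖ = u z ∧ ∀ᶠ s in 𝓝 z, ‖φ s‖ ≤ u s

theorem HasHolomorphicMinorantAt.nonneg (hu : HasHolomorphicMinorantAt u z) : 0 ≤ u z := by
  obtain ⟨φ, -, hφz, -⟩ := hu
  exact hφz ▸ norm_nonneg _

theorem HasHolomorphicMinorantAt.mono (hu : HasHolomorphicMinorantAt u z) (huv : u ≤ᶠ[𝓝 z] v)
    (hz : u z = v z) : HasHolomorphicMinorantAt v z := by
  obtain ⟨φ, hφ, hφz, hφu⟩ := hu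
  exact ⟨φ, hφ, hφz.trans hz, EventuallyLE.trans hφu huv⟩

theorem HasHolomorphicMinorantAt.mul (hu : HasHolomorphicMinorantAt u z)
    (hv : HasHolomorphicMinorantAt v z) : HasHolomorphicMinorantAt (fun s => u s * v s) z := by
  obtain ⟨φ, hφ, hφz, hφu⟩ := hu
  obtain ⟨ψ, hψ, hψz, hψv⟩ := hv
  refine ⟨fun s => φ s * ψ s, hφ.mul hψ, by rw [norm_mul, hφz, hψz], ?_⟩
  filter_upwards [hφu, hψv] with s hφs hψs
  rw [norm_mul]
  exact mul_le_mul hφs hψs (norm_nonneg _) ((norm_nonneg _).trans hφs)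

theorem hasHolomorphicMinorantAt_norm {E : Type*} [NormedAddCommGroup E] [NormedSpace ℂ E]
    {f : ℂ → E} (hf : AnalyticAt ℂ f z) : HasHolomorphicMinorantAt (fun s => ‖f s‖) z := by
  obtain ⟨ℓ, hℓ_norm, hℓ⟩ := exists_dual_vector'' ℂ (f z)
  refine ⟨fun s => ℓ (f s), (ℓ.analyticAt _).comp hf, by simp [hℓ], .of_forall fun s => ?_⟩
  exact (ℓ.le_of_opNorm_le hℓ_norm _).trans_eq (one_mul _)

theorem HasHolomorphicMinorantAt.prod {ι : Type*} {s : Finset ι} {u : ι → ℂ → ℝ}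
    (hu : ∀ i ∈ s, HasHolomorphicMinorantAt (u i) z) :
    HasHolomorphicMinorantAt (fun t => ∏ i ∈ s, u i t) z := by
  induction s using Finset.induction_on with
  | empty => simpa using hasHolomorphicMinorantAt_norm (analyticAt_const (v := (1 : ℂ)))
  | insert i s hi ih =>
    simp only [Finset.prod_insert hi]
    exact (hu i (s.mem_insert_self i)).mul (ih fun j hj => hu j (Finset.mem_insert_of_mem hj))

theorem exists_isMaxOn_mem_frontier {K : Set ℂ} (hK : IsCompact K) (hne : K.Nonempty)
    (hu : UpperSemicontinuousOn u K)
    (hmin : ∀ z ∈ interior K, HasHolomorphicMinorantAt u z) :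
    ∃ z ∈ frontier K, IsMaxOn u K z := by
  obtain ⟨a, haK, ha⟩ := hu.exists_isMaxOn hne hK
  rw [isMaxOn_iff] at ha
  set A : Set ℂ := K ∩ u ⁻¹' Ici (u a)
  have hA : IsCompact A := hu.isCompact_inter_preimage_Ici hK _
  by_contra! hfrontier
  have hA_interior : A ⊆ interior K := fun z hz => by
    by_contra hz'
    exact hfrontier z ⟨subset_closure hz.1, hz'⟩
      (isMaxOn_iff.2 fun s hs => (ha s hs).trans hz.2)
  have hA_open : IsOpen A := by
    refine isOpen_iff_mem_nhds.2 fun z hz => ?_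
    obtain ⟨φ, hφ, hφz, hφu⟩ := hmin z (hA_interior hz)
    have hK_nhds : ∀ᶠ s in 𝓝 z, s ∈ K := mem_interior_iff_mem_nhds.1 (hA_interior hz)
    have hφ_max : IsLocalMax (norm ∘ φ) z := by
      filter_upwards [hφu, hK_nhds] with s hs hsK
      exact hs.trans <| (ha s hsK).trans <| hz.2.trans_eq hφz.symm
    have hφ_const : ∀ᶠ s in 𝓝 z, φ s = φ z := Complex.eventually_eq_of_isLocalMax_norm
      (hφ.eventually_analyticAt.mono fun _ h => h.differentiableAt) hφ_max
    filter_upwards [hφu, hK_nhds, hφ_const] with s hs hsK hsφ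
    have huzs : u z ≤ u s := by rwa [← hφz, ← hsφ]
    exact ⟨hsK, le_trans hz.2 huzs⟩
  have hA_univ : A = univ := IsClopen.eq_univ ⟨hA.isClosed, hA_open⟩ ⟨a, haK, by simp⟩
  exact noncompact_univ ℂ (hA_univ ▸ hA)

theorem upperSemicontinuousOn_mul_of_pos {X : Type*} [TopologicalSpace X] {u g : X → ℝ}
    {K : Set X} (hu : UpperSemicontinuousOn u K) (hg : ContinuousOn g K)
    (hpos : ∀ x ∈ K, 0 < g x) : UpperSemicontinuousOn (fun x => u x * g x) K := by
  intro x hx y hy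
  obtain ⟨a, hua, hay⟩ := exists_between ((lt_div_iff₀ (hpos x hx)).2 hy)
  have hag : ∀ᶠ x' in 𝓝[K] x, a * g x' < y :=
    (continuousWithinAt_const.mul (hg x hx)).eventually_lt continuousWithinAt_const
      ((lt_div_iff₀ (hpos x hx)).1 hay)
  filter_upwards [hu x hx a hua, hag, self_mem_nhdsWithin] with x' hux' hagx' hx'
  exact (mul_lt_mul_of_pos_right hux' (hpos x' hx')).trans hagx'

-- The maximum principle is applied to `u` times the modulus of the pole `(s - c)⁻ᴺ` on an annulus
-- on whose inner circle `u` vanishes.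
theorem le_mul_div_pow_of_eqOn_zero {c : ℂ} {η R M : ℝ} (hη : 0 < η)
    (hu : UpperSemicontinuousOn u (closedBall c R))
    (hmin : ∀ s ∈ ball c R, HasHolomorphicMinorantAt u s)
    (hM : ∀ s ∈ closedBall c R, u s ≤ M) (hzero : EqOn u 0 (closedBall c η))
    (hz : z ∈ ball c R \ ball c η) (N : ℕ) : u z ≤ M * (dist z c / R) ^ N := by
  have hR : 0 < R := pos_of_mem_ball hz.1
  have hM_nonneg : 0 ≤ M := (hmin z hz.1).nonneg.trans (hM z (ball_subset_closedBall hz.1))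
  set K : Set ℂ := closedBall c R \ ball c η
  have hzK : z ∈ K := ⟨ball_subset_closedBall hz.1, hz.2⟩
  have hdist_pos : ∀ s ∈ K, 0 < dist s c := fun s hs => hη.trans_le (by simpa using hs.2)
  have hK_interior : interior K ⊆ ball c R :=
    (interior_mono sdiff_subset).trans (interior_closedBall c hR.ne').subset
  set g : ℂ → ℂ := fun s => ((s - c) ^ N)⁻¹
  have hg_norm : ∀ s, ‖g s‖ = (dist s c ^ N)⁻¹ := fun s => by simp [g, dist_eq_norm]
  have hg : ∀ s ∈ K, AnalyticAt ℂ g s := fun s hs =>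
    ((analyticAt_id.sub analyticAt_const).pow N).inv
      (pow_ne_zero N (sub_ne_zero.2 (dist_pos.1 (hdist_pos s hs))))
  obtain ⟨p, hp, hp_max⟩ := exists_isMaxOn_mem_frontier
    ((isCompact_closedBall c R).diff isOpen_ball) ⟨z, hzK⟩
    (upperSemicontinuousOn_mul_of_pos (hu.mono sdiff_subset)
      (fun s hs => (hg s hs).continuousAt.norm.continuousWithinAt)
      fun s hs => by rw [hg_norm]; exact inv_pos.2 (pow_pos (hdist_pos s hs) N))
    (fun s hs => (hmin s (hK_interior hs)).mul
      (hasHolomorphicMinorantAt_norm (hg s (interior_subset hs))))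
  have hp_bound : u p * ‖g p‖ ≤ M * (R ^ N)⁻¹ := by
    have hpK : p ∈ K := (isClosed_closedBall.sdiff isOpen_ball).frontier_subset hp
    by_cases hpR : dist p c = R
    · rw [hg_norm, hpR]
      gcongr
      exact hM p hpK.1
    · have hp_zero : u p = 0 := by
        refine hzero (mem_closedBall.2 (not_lt.1 fun hηp => hp.2 ?_))
        have hp_ball : p ∈ ball c R := lt_of_le_of_ne hpK.1 hpR
        exact interior_maximal (sdiff_subset_sdiff ball_subset_closedBall ball_subset_closedBall)
          (isOpen_ball.sdiff isClosed_closedBall) ⟨hp_ball, hηp.not_ge⟩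
      rw [hp_zero, zero_mul]
      positivity
  have hz_bound : u z * (dist z c ^ N)⁻¹ ≤ M * (R ^ N)⁻¹ :=
    (hg_norm z ▸ isMaxOn_iff.1 hp_max z hzK).trans hp_bound
  rw [← div_eq_mul_inv, ← div_eq_mul_inv, div_le_iff₀ (pow_pos (hdist_pos z hzK) N)] at hz_bound
  rwa [div_pow, mul_div_assoc', ← div_mul_eq_mul_div]

theorem eqOn_zero_ball_of_eventuallyEq_zero {c : ℂ} {R : ℝ}
    (hu : UpperSemicontinuousOn u (closedBall c R))
    (hmin : ∀ s ∈ ball c R, HasHolomorphicMinorantAt u s) (hzero : u =ᶠ[𝓝 c] 0) :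
    EqOn u 0 (ball c R) := by
  intro z hz
  obtain ⟨η, hη, hη_zero⟩ := nhds_basis_closedBall.eventually_iff.1 hzero
  obtain ⟨M, hM⟩ := hu.bddAbove_of_isCompact (isCompact_closedBall c R)
  by_cases hzη : z ∈ ball c η
  · exact hη_zero (ball_subset_closedBall hzη)
  have hlim : Tendsto (fun N : ℕ => M * (dist z c / R) ^ N) atTop (𝓝 (M * 0)) :=
    (tendsto_pow_atTop_nhds_zero_of_lt_one (by positivity [pos_of_mem_ball hz])
      ((div_lt_one (pos_of_mem_ball hz)).2 hz)).const_mul M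
  refine le_antisymm ?_ (hmin z hz).nonneg
  refine (ge_of_tendsto' hlim fun N => ?_).trans_eq (mul_zero M)
  exact le_mul_div_pow_of_eqOn_zero hη hu hmin (fun s hs => hM (mem_image_of_mem u hs))
    (fun s hs => hη_zero hs) ⟨hz, hzη⟩ N

theorem eqOn_zero_of_preconnected_of_eventuallyEq_zero {D : Set ℂ} {c : ℂ} (hD : IsOpen D)
    (hD_conn : IsPreconnected D) (hu : UpperSemicontinuousOn u D)
    (hmin : ∀ s ∈ D, HasHolomorphicMinorantAt u s) (hc : c ∈ D) (hzero : u =ᶠ[𝓝 c] 0) :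
    EqOn u 0 D := by
  set A : Set ℂ := {s | u =ᶠ[𝓝 s] 0}
  suffices hDA : D ⊆ A from fun s hs => (hDA hs).self_of_nhds
  refine hD_conn.subset_of_closure_inter_subset isOpen_setOfPred_eventually_nhds ⟨c, hc, hzero⟩ ?_
  rintro s ⟨hsA, hsD⟩
  obtain ⟨ρ, hρ, hρD⟩ := Metric.isOpen_iff.1 hD s hsD
  obtain ⟨a, haA, hsa⟩ := Metric.mem_closure_iff.1 hsA (ρ / 2) (half_pos hρ)
  have hball : closedBall a (ρ / 2) ⊆ D :=
    (closedBall_subset_ball' (by linarith [dist_comm a s])).trans hρD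
  have hu_zero := eqOn_zero_ball_of_eventuallyEq_zero (hu.mono hball)
    (fun t ht => hmin t (hball (ball_subset_closedBall ht))) haA
  exact hu_zero.eventuallyEq_of_mem (isOpen_ball.mem_nhds hsa)

end HolomorphicMinorants

section FiberSup

variable {X W : Type*} {π : W → X} {Z : Set W} {v : W → ℝ} {s : X}

/-- The supremum of `v` over the part of `Z` that the projection `π` maps to `s`. With
`sSup ∅ = 0` this is `0` if that part is empty, the right convention for nonnegative `v`. -/
def fiberSup (π : W → X) (Z : Set W) (v : W → ℝ) (s : X) : ℝ :=
  sSup (v '' (Z ∩ π ⁻¹' {s}))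

theorem fiberSup_nonneg (hv : ∀ w ∈ Z, 0 ≤ v w) : 0 ≤ fiberSup π Z v s :=
  Real.sSup_nonneg (forall_mem_image.2 fun w hw => hv w hw.1)

theorem fiberSup_eq_zero (hv : ∀ w ∈ Z, π w = s → v w = 0) : fiberSup π Z v s = 0 :=
  le_antisymm (Real.sSup_nonpos (forall_mem_image.2 fun w hw => (hv w hw.1 hw.2).le))
    (Real.sSup_nonneg (forall_mem_image.2 fun w hw => (hv w hw.1 hw.2).ge))

variable [TopologicalSpace W]

theorem le_fiberSup (hZ : IsCompact Z) (hv : ContinuousOn v Z) {w : W} (hw : w ∈ Z) :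
    v w ≤ fiberSup π Z v (π w) :=
  le_csSup ((hZ.bddAbove_image hv).mono (image_mono inter_subset_left))
    (mem_image_of_mem v ⟨hw, rfl⟩)

variable [TopologicalSpace X]

theorem exists_eq_fiberSup_of_pos [T1Space X] (hπ : Continuous π) (hZ : IsCompact Z)
    (hv : ContinuousOn v Z) (hpos : 0 < fiberSup π Z v s) :
    ∃ w ∈ Z, π w = s ∧ v w = fiberSup π Z v s := by
  have hne : (Z ∩ π ⁻¹' {s}).Nonempty := by
    by_contra! hempty
    simp [fiberSup, hempty] at hpos
  have hcompact : IsCompact (Z ∩ π ⁻¹' {s}) := hZ.inter_right (isClosed_singleton.preimage hπ)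
  obtain ⟨w, ⟨hwZ, hws⟩, hw⟩ := hcompact.exists_sSup_image_eq hne (hv.mono inter_subset_left)
  exact ⟨w, hwZ, hws, hw.symm⟩

variable [T2Space X]

theorem upperSemicontinuous_fiberSup (hπ : Continuous π) (hZ : IsCompact Z)
    (hv : ContinuousOn v Z) (hv_nonneg : ∀ w ∈ Z, 0 ≤ v w) :
    UpperSemicontinuous (fiberSup π Z v) := by
  refine upperSemicontinuous_iff_isClosed_preimage.2 fun c => ?_
  rcases le_or_gt c 0 with hc | hc
  · convert isClosed_univ
    exact eq_univ_of_forall fun s => hc.trans (fiberSup_nonneg hv_nonneg)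
  · have h_image : fiberSup π Z v ⁻¹' Ici c = π '' (Z ∩ v ⁻¹' Ici c) := by
      ext s
      constructor
      · intro hs
        obtain ⟨w, hwZ, hws, hw⟩ := exists_eq_fiberSup_of_pos hπ hZ hv (hc.trans_le hs)
        exact ⟨w, ⟨hwZ, hs.trans_eq hw.symm⟩, hws⟩
      · rintro ⟨w, ⟨hwZ, hw⟩, rfl⟩
        exact le_trans hw (le_fiberSup hZ hv hwZ)
    rw [h_image]
    exact ((hv.upperSemicontinuousOn.isCompact_inter_preimage_Ici hZ c).image hπ).isClosed

theorem eventually_forall_mem_fiber {P : W → Prop} (hπ : Continuous π) (hZ : IsCompact Z)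
    (hP : ∀ w ∈ Z, π w = s → ∀ᶠ w' in 𝓝 w, P w') :
    ∀ᶠ t in 𝓝 s, ∀ w ∈ Z, π w = t → P w := by
  refine hZ.eventually_forall_of_forall_eventually (P := fun t w => π w = t → P w) fun w hw => ?_
  by_cases hws : π w = s
  · filter_upwards [continuous_snd.continuousAt.eventually (hP w hw hws)] with p hp _ using hp
  · have h_ne : ∀ᶠ p : X × W in 𝓝 (s, w), π p.2 ≠ p.1 :=
      (isOpen_ne_fun (by fun_prop) (by fun_prop)).mem_nhds hws
    filter_upwards [h_ne] with p hp hp' using absurd hp' hp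

end FiberSup

section PartialJacobian

variable {𝕜 P E : Type*} [RCLike 𝕜] [NormedAddCommGroup P] [NormedSpace 𝕜 P]
  [NormedAddCommGroup E] [NormedSpace 𝕜 E] {F : P × E → E} {p : P × E}

theorem analyticAt_continuousLinearMap_det [FiniteDimensional 𝕜 E] (A : E →L[𝕜] E) :
    AnalyticAt 𝕜 (fun A : E →L[𝕜] E => A.det) A := by
  set b := Module.finBasis 𝕜 E
  let entry (i j) : (E →L[𝕜] E) →L[𝕜] 𝕜 :=
    LinearMap.toContinuousLinearMap (b.coord j) ∘L ContinuousLinearMap.apply 𝕜 E (b i)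
  have h_det : ∀ A : E →L[𝕜] E, A.det = ∑ σ : Equiv.Perm (Fin (Module.finrank 𝕜 E)),
      ((Equiv.Perm.sign σ : ℤ) : 𝕜) * ∏ i, entry i (σ i) A := fun A => by
    rw [ContinuousLinearMap.det, ← LinearMap.det_toMatrix b, Matrix.det_apply']
    simp [LinearMap.toMatrix_apply, entry]
  simp only [h_det]
  exact Finset.analyticAt_fun_sum _ fun σ _ => analyticAt_const.mul
    (Finset.analyticAt_fun_prod _ fun i _ => (entry i (σ i)).analyticAt A)

variable (𝕜) in
/-- The Jacobian determinant of `F` with respect to its second variable. -/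
def partialJacobian (F : P × E → E) (p : P × E) : 𝕜 :=
  (fderiv 𝕜 F p ∘L .inr 𝕜 P E).det

theorem analyticAt_partialJacobian [FiniteDimensional 𝕜 E] (hF : AnalyticAt 𝕜 F p) :
    AnalyticAt 𝕜 (partialJacobian 𝕜 F) p :=
  have : CompleteSpace E := FiniteDimensional.complete 𝕜 E
  (analyticAt_continuousLinearMap_det _).comp
    ((((ContinuousLinearMap.compL 𝕜 E (P × E) E).flip (.inr 𝕜 P E)).analyticAt _).comp hF.fderiv)

theorem partialJacobian_ne_zero_iff [FiniteDimensional 𝕜 E] (hF : DifferentiableAt 𝕜 F p) :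
    partialJacobian 𝕜 F p ≠ 0 ↔ Function.Bijective (fderiv 𝕜 (fun x => F (p.1, x)) p.2) := by
  have h_slice : fderiv 𝕜 (fun x => F (p.1, x)) p.2 = fderiv 𝕜 F p ∘L .inr 𝕜 P E :=
    (hF.hasFDerivAt.comp p.2 (hasFDerivAt_prodMk_right p.1 p.2)).fderiv
  rw [h_slice, partialJacobian, ContinuousLinearMap.det, ← isUnit_iff_ne_zero,
    ← LinearMap.isUnit_iff_isUnit_det, Module.End.isUnit_iff]
  rfl

theorem exists_analyticAt_eq_iff_of_partialJacobian_ne_zero [CompleteSpace P]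
    [FiniteDimensional 𝕜 E] (hF : AnalyticAt 𝕜 F p) (hp : partialJacobian 𝕜 F p ≠ 0) :
    ∃ ξ : P → E, AnalyticAt 𝕜 ξ p.1 ∧ ξ p.1 = p.2 ∧ ∀ᶠ q in 𝓝 p, F q = F p ↔ ξ q.1 = q.2 := by
  have : CompleteSpace E := FiniteDimensional.complete 𝕜 E
  have hF_smooth : ContDiffAt 𝕜 ⊤ F p := hF.contDiffAt
  have hF_inv : (fderiv 𝕜 F p ∘L .inr 𝕜 P E).IsInvertible :=
    ⟨(_ : E →L[𝕜] E).toContinuousLinearEquivOfDetNeZero hp, rfl⟩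
  exact ⟨hF_smooth.implicitFunction (by simp) hF_inv,
    (hF_smooth.contDiffAt_implicitFunction (by simp) hF_inv).analyticAt,
    hF_smooth.implicitFunction_apply_self (by simp) hF_inv,
    hF_smooth.eventually_apply_eq_iff_implicitFunction (by simp) hF_inv⟩

end PartialJacobian

section ZeroTuples

variable {P E G : Type*} [Zero G]

/-- The tuples, indexed by `ι`, of points of `C` that are zeros of a common member `F (s, ·)`,
`s ∈ K`, of the family `F`. -/
def zeroTuples (F : P × E → G) (K : Set P) (C : Set E) (ι : Type*) : Set (P × (ι → E)) :=
  {p | p.1 ∈ K ∧ ∀ i, p.2 i ∈ C ∧ F (p.1, p.2 i) = 0}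

theorem isCompact_zeroTuples [TopologicalSpace P] [T2Space P] [TopologicalSpace E] [T2Space E]
    [TopologicalSpace G] [T1Space G] {F : P × E → G} {K : Set P} {C : Set E} {ι : Type*}
    (hK : IsCompact K) (hC : IsCompact C) (hF : ContinuousOn F (K ×ˢ C)) :
    IsCompact (zeroTuples F K C ι) := by
  have h_compact : IsCompact (K ×ˢ univ.pi fun _ : ι => C) :=
    hK.prod (isCompact_univ_pi fun _ => hC)
  have h_cont : ContinuousOn (fun (p : P × (ι → E)) i => F (p.1, p.2 i))
      (K ×ˢ univ.pi fun _ : ι => C) :=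
    continuousOn_pi.2 fun i => hF.comp (by fun_prop) fun p hp => ⟨hp.1, hp.2 i (mem_univ i)⟩
  have h_eq : zeroTuples F K C ι = (K ×ˢ univ.pi fun _ => C) ∩
      (fun p i => F (p.1, p.2 i)) ⁻¹' {0} := by
    ext p
    simp [zeroTuples, funext_iff, forall_and, and_assoc]
  rw [h_eq]
  exact h_compact.of_isClosed_subset (h_cont.preimage_isClosed_of_isClosed h_compact.isClosed
    isClosed_singleton) inter_subset_left

end ZeroTuples

section TupleWeight

variable {E ι : Type*} [NormedAddCommGroup E] [NormedSpace ℂ E] [Fintype ι] {F : ℂ × E → E}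
  {K : Set ℂ} {C : Set E} {s : ℂ}

/-- A weight on pairs of a parameter `s` and a tuple of points, whose nonvanishing expresses that
the points are distinct and that `F (s, ·)` is a local diffeomorphism at each of them. -/
def tupleWeight (F : ℂ × E → E) (p : ℂ × (ι → E)) : ℝ :=
  (∏ i, ‖partialJacobian ℂ F (p.1, p.2 i)‖) *
    ∏ ij ∈ Finset.univ.offDiag, ‖p.2 ij.1 - p.2 ij.2‖

theorem tupleWeight_nonneg (p : ℂ × (ι → E)) : 0 ≤ tupleWeight F p := by
  unfold tupleWeight
  positivity

theorem tupleWeight_ne_zero_iff {p : ℂ × (ι → E)} : tupleWeight F p ≠ 0 ↔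
    (∀ i, partialJacobian ℂ F (p.1, p.2 i) ≠ 0) ∧ Function.Injective p.2 := by
  rw [tupleWeight, mul_ne_zero_iff, Finset.prod_ne_zero_iff, Finset.prod_ne_zero_iff]
  simp [sub_eq_zero, Function.Injective, not_imp_not]

variable [FiniteDimensional ℂ E]

theorem continuousOn_tupleWeight (hF : AnalyticOnNhd ℂ F (K ×ˢ C)) :
    ContinuousOn (tupleWeight F) (zeroTuples F K C ι) := by
  have h_jacobian : ContinuousOn (partialJacobian ℂ F) (K ×ˢ C) := fun p hp =>
    (analyticAt_partialJacobian (hF p hp)).continuousAt.continuousWithinAt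
  have h_comp : ∀ i, ContinuousOn (fun p : ℂ × (ι → E) => partialJacobian ℂ F (p.1, p.2 i))
      (zeroTuples F K C ι) := fun i =>
    h_jacobian.comp (by fun_prop) fun p hp => ⟨hp.1, (hp.2 i).1⟩
  exact (continuousOn_finsetProd _ fun i _ => (h_comp i).norm).mul (by fun_prop)

theorem hasHolomorphicMinorantAt_tupleWeight {ξ : ι → ℂ → E} (hξ : ∀ i, AnalyticAt ℂ (ξ i) s)
    (hF : ∀ i, AnalyticAt ℂ F (s, ξ i s)) :
    HasHolomorphicMinorantAt (fun t => tupleWeight F (t, fun i => ξ i t)) s := by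
  refine .mul (.prod fun i _ => ?_) (.prod fun ij _ => ?_)
  · have h_graph : AnalyticAt ℂ (fun t => (t, ξ i t)) s := analyticAt_id.prod (hξ i)
    exact hasHolomorphicMinorantAt_norm ((analyticAt_partialJacobian (hF i)).comp_of_eq h_graph rfl)
  · exact hasHolomorphicMinorantAt_norm ((hξ ij.1).sub (hξ ij.2))

/-- The largest weight of a tuple of zeros of `F (s, ·)`. For `s ∈ K` it vanishes exactly if
`F (s, ·)` has fewer than `card ι` nondegenerate zeros in `C`. -/
def maxTupleWeight (F : ℂ × E → E) (K : Set ℂ) (C : Set E) (ι : Type*) [Fintype ι] : ℂ → ℝ :=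
  fiberSup Prod.fst (zeroTuples F K C ι) (tupleWeight F)

theorem hasHolomorphicMinorantAt_maxTupleWeight (hK : IsCompact K) (hC : IsCompact C)
    (hF : AnalyticOnNhd ℂ F (K ×ˢ C)) (hFC : ∀ p ∈ K ×ˢ C, F p = 0 → p.2 ∈ interior C)
    (hs : s ∈ interior K) : HasHolomorphicMinorantAt (maxTupleWeight F K C ι) s := by
  have hZ := isCompact_zeroTuples (ι := ι) hK hC hF.continuousOn
  have h_nonneg : ∀ t, 0 ≤ maxTupleWeight F K C ι t := fun t =>
    fiberSup_nonneg fun p _ => tupleWeight_nonneg p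
  rcases (h_nonneg s).eq_or_lt with h_zero | h_pos
  · exact ⟨0, analyticAt_const, by simpa using h_zero,
      .of_forall fun t => by simpa using h_nonneg t⟩
  obtain ⟨p, hpZ, rfl, hp_max⟩ :=
    exists_eq_fiberSup_of_pos continuous_fst hZ (continuousOn_tupleWeight hF) h_pos
  have hp_nondeg := (tupleWeight_ne_zero_iff.1 (hp_max.trans_ne h_pos.ne')).1
  have hp_mem : ∀ i, (p.1, p.2 i) ∈ K ×ˢ C := fun i => ⟨hpZ.1, (hpZ.2 i).1⟩
  choose ξ hξ hξp hξF using fun i =>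
    exists_analyticAt_eq_iff_of_partialJacobian_ne_zero (hF _ (hp_mem i)) (hp_nondeg i)
  have h_branch : ∀ i, ∀ᶠ t in 𝓝 p.1, ξ i t ∈ C ∧ F (t, ξ i t) = 0 := fun i => by
    have h_graph : Tendsto (fun t => (t, ξ i t)) (𝓝 p.1) (𝓝 (p.1, p.2 i)) :=
      tendsto_id.prodMk_nhds ((hξ i).continuousAt.tendsto.trans_eq (by rw [hξp]))
    have h_interior : C ∈ 𝓝 (p.2 i) :=
      mem_interior_iff_mem_nhds.1 (hFC _ (hp_mem i) (hpZ.2 i).2)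
    filter_upwards [h_graph.snd_nhds h_interior, h_graph.eventually (hξF i)] with t htC htF
    exact ⟨htC, (htF.2 rfl).trans (hpZ.2 i).2⟩
  have h_weight : HasHolomorphicMinorantAt (fun t => tupleWeight F (t, fun i => ξ i t)) p.1 :=
    hasHolomorphicMinorantAt_tupleWeight hξ fun i => by rw [hξp]; exact hF _ (hp_mem i)
  refine h_weight.mono ?_ ?_
  · filter_upwards [eventually_all.2 h_branch, mem_interior_iff_mem_nhds.1 hs] with t ht htK
    exact le_fiberSup hZ (continuousOn_tupleWeight hF) (w := (t, fun i => ξ i t)) ⟨htK, ht⟩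
  · simp only [hξp]
    exact hp_max

theorem maxTupleWeight_eventuallyEq_zero (hK : IsCompact K) (hC : IsCompact C)
    (hF : AnalyticOnNhd ℂ F (K ×ˢ C))
    (hnondeg : ∀ x ∈ C, F (s, x) = 0 → partialJacobian ℂ F (s, x) ≠ 0)
    (hinj : ∀ y : ι → E, (∀ i, y i ∈ C ∧ F (s, y i) = 0) → ¬ Function.Injective y) :
    maxTupleWeight F K C ι =ᶠ[𝓝 s] 0 := by
  have h_weight : ∀ p ∈ zeroTuples F K C ι, p.1 = s →
      ∀ᶠ q in 𝓝 p, q ∈ zeroTuples F K C ι → tupleWeight F q = 0 := by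
    rintro p ⟨hpK, hp⟩ rfl
    obtain ⟨i, j, hij, hij_ne⟩ := Function.not_injective_iff.1 (hinj p.2 hp)
    obtain ⟨ξ, -, -, hξ⟩ := exists_analyticAt_eq_iff_of_partialJacobian_ne_zero
      (hF (p.1, p.2 i) ⟨hpK, (hp i).1⟩) (hnondeg _ (hp i).1 (hp i).2)
    have h_unique : ∀ k, p.2 k = p.2 i → ∀ᶠ q in 𝓝 p, F (q.1, q.2 k) = 0 → ξ q.1 = q.2 k := by
      intro k hk
      have h_cont : Tendsto (fun q : ℂ × (ι → E) => (q.1, q.2 k)) (𝓝 p) (𝓝 (p.1, p.2 i)) :=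
        hk ▸ Continuous.tendsto (by fun_prop) p
      filter_upwards [h_cont.eventually hξ] with q hq hq_zero
      exact hq.1 (hq_zero.trans (hp i).2.symm)
    filter_upwards [h_unique i rfl, h_unique j hij.symm] with q hqi hqj hqZ
    have hq_eq : q.2 i = q.2 j := (hqi (hqZ.2 i).2).symm.trans (hqj (hqZ.2 j).2)
    exact not_not.1 fun hq => hij_ne ((tupleWeight_ne_zero_iff.1 hq).2 hq_eq)
  filter_upwards [eventually_forall_mem_fiber continuous_fst
    (isCompact_zeroTuples hK hC hF.continuousOn) h_weight] with t ht
  exact fiberSup_eq_zero fun p hp hpt => ht p hp hpt hp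

end TupleWeight

section Rouche

theorem exists_one_lt_forall_mul_norm_sub_lt {X E : Type*} [TopologicalSpace X]
    [SeminormedAddCommGroup E] {S : Set X} {f g : X → E} (hS : IsCompact S)
    (hf : ∀ x ∈ S, ContinuousAt f x) (hg : ∀ x ∈ S, ContinuousAt g x)
    (hfg : ∀ x ∈ S, ‖g x - f x‖ < ‖f x‖) :
    ∃ R : ℝ, 1 < R ∧ ∀ x ∈ S, R * ‖g x - f x‖ < ‖f x‖ := by
  have h_nhds : ∀ᶠ R : ℝ in 𝓝 1, ∀ x ∈ S, R * ‖g x - f x‖ < ‖f x‖ := by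
    refine hS.eventually_forall_of_forall_eventually fun x hx => ?_
    have hf' : ContinuousAt (fun p : ℝ × X => f p.2) (1, x) := (hf x hx).comp continuousAt_snd
    have hg' : ContinuousAt (fun p : ℝ × X => g p.2) (1, x) := (hg x hx).comp continuousAt_snd
    exact (continuousAt_fst.mul (hg'.sub hf').norm).eventually_lt hf'.norm (by simpa using hfg x hx)
  obtain ⟨R, hR, hR_one⟩ :=
    ((h_nhds.filter_mono nhdsWithin_le_nhds).and (self_mem_nhdsWithin (s := Ioi 1))).exists
  exact ⟨R, hR_one, hR⟩

variable {E : Type*} [NormedAddCommGroup E] [NormedSpace ℂ E] [FiniteDimensional ℂ E] {C : Set E}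
  {f g : E → E}

-- If `F (s₁, ·)` has `k` zeros and `F (s₀, ·)` has fewer, then the largest weight of a `k`-tuple of
-- zeros vanishes near `s₀` but not at `s₁`, against the identity principle.
theorem encard_zeros_le_of_homotopy {F : ℂ × E → E} {K : Set ℂ} {s₀ s₁ : ℂ} (hK : IsCompact K)
    (hK_conn : IsPreconnected (interior K)) (hC : IsCompact C) (hF : AnalyticOnNhd ℂ F (K ×ˢ C))
    (hFC : ∀ p ∈ K ×ˢ C, F p = 0 → p.2 ∈ interior C) (hs₀ : s₀ ∈ interior K)
    (hs₁ : s₁ ∈ interior K)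
    (h₀ : ∀ x ∈ interior C, F (s₀, x) = 0 → partialJacobian ℂ F (s₀, x) ≠ 0)
    (h₁ : ∀ x ∈ interior C, F (s₁, x) = 0 → partialJacobian ℂ F (s₁, x) ≠ 0) :
    {x ∈ interior C | F (s₁, x) = 0}.encard ≤ {x ∈ interior C | F (s₀, x) = 0}.encard := by
  refine ENat.forall_natCast_le_iff_le.1 fun k hk => ?_
  obtain ⟨t, ht_zeros, htk⟩ := exists_subset_encard_eq hk
  have : Fintype t := (finite_of_encard_eq_coe htk).fintype
  rw [← htk]
  by_contra hlt
  have hinj : ∀ y : t → E, (∀ i, y i ∈ C ∧ F (s₀, y i) = 0) → ¬ Function.Injective y := by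
    intro y hy hy_inj
    have hy_mem : ∀ i, y i ∈ {x ∈ interior C | F (s₀, x) = 0} := fun i =>
      ⟨hFC (s₀, y i) ⟨interior_subset hs₀, (hy i).1⟩ (hy i).2, (hy i).2⟩
    exact hlt (Function.Embedding.encard_le
      ⟨fun i => ⟨y i, hy_mem i⟩, fun i j hij => hy_inj (congrArg Subtype.val hij)⟩)
  have h_near : maxTupleWeight F K C t =ᶠ[𝓝 s₀] 0 :=
    maxTupleWeight_eventuallyEq_zero hK hC hF
      (fun x hx hx_zero => h₀ x (hFC (s₀, x) ⟨interior_subset hs₀, hx⟩ hx_zero) hx_zero) hinj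
  have h_usc : UpperSemicontinuous (maxTupleWeight F K C t) :=
    upperSemicontinuous_fiberSup continuous_fst (isCompact_zeroTuples hK hC hF.continuousOn)
      (continuousOn_tupleWeight hF) fun p _ => tupleWeight_nonneg p
  have h_zero : maxTupleWeight F K C t s₁ = 0 :=
    eqOn_zero_of_preconnected_of_eventuallyEq_zero isOpen_interior hK_conn
      (h_usc.upperSemicontinuousOn _)
      (fun s hs => hasHolomorphicMinorantAt_maxTupleWeight hK hC hF hFC hs) hs₀ h_near hs₁
  have h_tuple : (s₁, Subtype.val) ∈ zeroTuples F K C t :=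
    ⟨interior_subset hs₁, fun i => ⟨interior_subset (ht_zeros i.2).1, (ht_zeros i.2).2⟩⟩
  have h_weight : tupleWeight F (s₁, (Subtype.val : t → E)) ≠ 0 := tupleWeight_ne_zero_iff.2
    ⟨fun i => h₁ i (ht_zeros i.2).1 (ht_zeros i.2).2, Subtype.val_injective⟩
  have h_le := le_fiberSup (π := Prod.fst) (isCompact_zeroTuples hK hC hF.continuousOn)
    (continuousOn_tupleWeight hF) h_tuple
  exact h_weight (le_antisymm (h_le.trans_eq h_zero) (tupleWeight_nonneg _))

theorem encard_zeros_eq_of_homotopy {F : ℂ × E → E} {K : Set ℂ} {s₀ s₁ : ℂ} (hK : IsCompact K)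
    (hK_conn : IsPreconnected (interior K)) (hC : IsCompact C) (hF : AnalyticOnNhd ℂ F (K ×ˢ C))
    (hFC : ∀ p ∈ K ×ˢ C, F p = 0 → p.2 ∈ interior C) (hs₀ : s₀ ∈ interior K)
    (hs₁ : s₁ ∈ interior K)
    (h₀ : ∀ x ∈ interior C, F (s₀, x) = 0 → partialJacobian ℂ F (s₀, x) ≠ 0)
    (h₁ : ∀ x ∈ interior C, F (s₁, x) = 0 → partialJacobian ℂ F (s₁, x) ≠ 0) :
    {x ∈ interior C | F (s₀, x) = 0}.encard = {x ∈ interior C | F (s₁, x) = 0}.encard :=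
  le_antisymm (encard_zeros_le_of_homotopy hK hK_conn hC hF hFC hs₁ hs₀ h₁ h₀)
    (encard_zeros_le_of_homotopy hK hK_conn hC hF hFC hs₀ hs₁ h₀ h₁)

theorem encard_zeros_eq_of_norm_sub_lt (hC : IsCompact C) (hf : AnalyticOnNhd ℂ f C)
    (hg : AnalyticOnNhd ℂ g C) (hfg : ∀ x ∈ frontier C, ‖g x - f x‖ < ‖f x‖)
    (hf_nondeg : ∀ x ∈ interior C, f x = 0 → Function.Bijective (fderiv ℂ f x))
    (hg_nondeg : ∀ x ∈ interior C, g x = 0 → Function.Bijective (fderiv ℂ g x)) :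
    {x ∈ interior C | f x = 0}.encard = {x ∈ interior C | g x = 0}.encard := by
  have h_frontier : frontier C ⊆ C := hC.isClosed.frontier_subset
  obtain ⟨R, hR_one, hR⟩ := exists_one_lt_forall_mul_norm_sub_lt
    (hC.of_isClosed_subset isClosed_frontier h_frontier)
    (fun x hx => (hf x (h_frontier hx)).continuousAt)
    (fun x hx => (hg x (h_frontier hx)).continuousAt) hfg
  set K : Set ℂ := closedBall 0 R
  have hK_interior : interior K = ball 0 R := interior_closedBall 0 (zero_lt_one.trans hR_one).ne'
  set F : ℂ × E → E := fun p => f p.2 + p.1 • (g p.2 - f p.2)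
  have hF : AnalyticOnNhd ℂ F (K ×ˢ C) := fun p hp => by
    have hfp : AnalyticAt ℂ (fun p : ℂ × E => f p.2) p := (hf p.2 hp.2).comp analyticAt_snd
    have hgp : AnalyticAt ℂ (fun p : ℂ × E => g p.2) p := (hg p.2 hp.2).comp analyticAt_snd
    exact hfp.add (analyticAt_fst.smul (hgp.sub hfp))
  have hFC : ∀ p ∈ K ×ˢ C, F p = 0 → p.2 ∈ interior C := by
    rintro ⟨s, x⟩ ⟨hs, hx⟩ hp
    by_contra hx_interior
    refine (hR x ⟨subset_closure hx, hx_interior⟩).not_ge ?_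
    have hfx : f x = -(s • (g x - f x)) := eq_neg_of_add_eq_zero_left hp
    calc ‖f x‖ = ‖-(s • (g x - f x))‖ := congrArg norm hfx
      _ = ‖s‖ * ‖g x - f x‖ := by rw [norm_neg, norm_smul]
      _ ≤ R * ‖g x - f x‖ := by gcongr; exact mem_closedBall_zero_iff.1 hs
  have h_nondeg : ∀ s ∈ interior K, ∀ h : E → E, (∀ x, F (s, x) = h x) →
      (∀ x ∈ interior C, h x = 0 → Function.Bijective (fderiv ℂ h x)) →
      ∀ x ∈ interior C, F (s, x) = 0 → partialJacobian ℂ F (s, x) ≠ 0 := by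
    intro s hs h hFh hh x hx hx_zero
    rw [partialJacobian_ne_zero_iff
      (hF (s, x) ⟨interior_subset hs, interior_subset hx⟩).differentiableAt, funext hFh]
    exact hh x hx (hFh x ▸ hx_zero)
  have hF_zero : ∀ x, F (0, x) = f x := fun x => by simp [F]
  have hF_one : ∀ x, F (1, x) = g x := fun x => by simp [F]
  have h0K : (0 : ℂ) ∈ interior K := by simpa [hK_interior] using zero_lt_one.trans hR_one
  have h1K : (1 : ℂ) ∈ interior K := by simpa [hK_interior] using hR_one
  have h_encard := encard_zeros_eq_of_homotopy (isCompact_closedBall 0 R)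
    (hK_interior ▸ (convex_ball (0 : ℂ) R).isPreconnected) hC hF hFC h0K h1K
    (h_nondeg 0 h0K f hF_zero hf_nondeg) (h_nondeg 1 h1K g hF_one hg_nondeg)
  simpa only [hF_zero, hF_one] using h_encard

theorem eventually_encard_fiber_eq_of_norm_sub_lt (hC : IsCompact C) (hf : AnalyticOnNhd ℂ f C)
    (hg : AnalyticOnNhd ℂ g C) (hfg : ∀ x ∈ frontier C, ‖g x - f x‖ < ‖f x‖) :
    ∀ᶠ p : E × E in 𝓝 0,
      (∀ x ∈ interior C, f x = p.1 → Function.Bijective (fderiv ℂ f x)) →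
      (∀ x ∈ interior C, g x = p.2 → Function.Bijective (fderiv ℂ g x)) →
      {x ∈ interior C | f x = p.1}.encard = {x ∈ interior C | g x = p.2}.encard := by
  have h_frontier : frontier C ⊆ C := hC.isClosed.frontier_subset
  have h_close : ∀ᶠ p : E × E in 𝓝 0,
      ∀ x ∈ frontier C, ‖(g x - p.2) - (f x - p.1)‖ < ‖f x - p.1‖ := by
    have h_compact := hC.of_isClosed_subset isClosed_frontier h_frontier
    refine h_compact.eventually_forall_of_forall_eventually fun x hx => ?_
    have hfp : ContinuousAt (fun z : (E × E) × E => f z.2 - z.1.1) (0, x) :=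
      ((hf x (h_frontier hx)).continuousAt.comp continuousAt_snd).sub (by fun_prop)
    have hgp : ContinuousAt (fun z : (E × E) × E => g z.2 - z.1.2) (0, x) :=
      ((hg x (h_frontier hx)).continuousAt.comp continuousAt_snd).sub (by fun_prop)
    exact (hgp.sub hfp).norm.eventually_lt hfp.norm (by simpa using hfg x hx)
  filter_upwards [h_close] with p hp hf_reg hg_reg
  have h_nondeg : ∀ (h : E → E) (q : E),
      (∀ x ∈ interior C, h x = q → Function.Bijective (fderiv ℂ h x)) →
      ∀ x ∈ interior C, h x - q = 0 → Function.Bijective (fderiv ℂ (fun x => h x - q) x) := by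
    simp only [fderiv_sub_const, sub_eq_zero]
    exact fun h q hq => hq
  simpa only [sub_eq_zero] using encard_zeros_eq_of_norm_sub_lt (f := fun x => f x - p.1)
    (g := fun x => g x - p.2) hC (hf.sub analyticOnNhd_const) (hg.sub analyticOnNhd_const)
    hp (h_nondeg f p.1 hf_reg) (h_nondeg g p.2 hg_reg)

end Rouche

section ZeroOrder

variable {g h : Cn n → Cn n} {p q : Cn n} {k : ℕ} {s t : Set (Cn n)}

theorem IsRegularValueOn.mono (hq : IsRegularValueOn h t q) (hst : s ⊆ t) :
    IsRegularValueOn h s q :=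
  fun x hx => hq x (hst hx)

theorem exists_norm_lt_isRegularValueOn (hh : ∀ x ∈ s, DifferentiableAt ℂ h x) {ε : ℝ}
    (hε : 0 < ε) : ∃ q, ‖q‖ < ε ∧ IsRegularValueOn h s q := by
  set crit : Set (Cn n) := {x ∈ s | ¬ Function.Bijective (fderiv ℂ h x)}
  have h_sard : MeasureTheory.volume (h '' crit) = 0 := by
    refine MeasureTheory.addHaar_image_eq_zero_of_det_fderivWithin_eq_zero _
      (f' := fun x => (fderiv ℂ h x).restrictScalars ℝ)
      (fun x hx => ((hh x hx.1).hasFDerivAt.restrictScalars ℝ).hasFDerivWithinAt) fun x hx => ?_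
    by_contra h_det
    have h_unit : IsUnit ((fderiv ℂ h x).restrictScalars ℝ : Cn n →ₗ[ℝ] Cn n) :=
      (LinearMap.isUnit_iff_isUnit_det _).2 (isUnit_iff_ne_zero.2 h_det)
    have h_bij : Function.Bijective ((fderiv ℂ h x).restrictScalars ℝ) :=
      (Module.End.isUnit_iff _).1 h_unit
    exact hx.2 h_bij
  have h_not_subset : ¬ ball (0 : Cn n) ε ⊆ h '' crit := fun h_subset =>
    (measure_ball_pos MeasureTheory.volume (0 : Cn n) hε).ne'
      (MeasureTheory.measure_mono_null h_subset h_sard)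
  obtain ⟨q, hq, hq_crit⟩ := not_subset.1 h_not_subset
  exact ⟨q, mem_ball_zero_iff.1 hq, fun x hx hxq =>
    by_contra fun h_deg => hq_crit ⟨x, ⟨hx, h_deg⟩, hxq⟩⟩

theorem HasZeroOrder.eventually_exists_ncard_fiber_eq (H : HasZeroOrder h p k) :
    ∀ᶠ r in 𝓝[>] 0, ∀ ε > 0, ∃ q, ‖q‖ < ε ∧ IsRegularValueOn h (ball p r) q ∧
      {x ∈ ball p r | h x = q}.ncard = k := by
  obtain ⟨r₀, hr₀, hh, -, h_iso, h_reg, δ, hδ, h_count⟩ := H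
  filter_upwards [Ioc_mem_nhdsGT hr₀] with r ⟨hr, hrr₀⟩ ε hε
  obtain ⟨c, hc, hch⟩ : ∃ c, 0 < c ∧ ∀ x ∈ closedBall p r₀ \ ball p r, c ≤ ‖h x‖ :=
    ((isCompact_closedBall p r₀).diff isOpen_ball).exists_forall_le'
      (hh.continuousOn.mono sdiff_subset).norm fun x hx => norm_pos_iff.2 fun hx_zero =>
        hx.2 (h_iso x hx.1 hx_zero ▸ mem_ball_self hr)
  obtain ⟨q, hq_small, hq⟩ := h_reg (min ε (min δ c)) (by positivity)
  obtain ⟨hqε, hqδ, hqc⟩ : ‖q‖ < ε ∧ ‖q‖ < δ ∧ ‖q‖ < c := by simpa only [lt_min_iff] using hq_small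
  have h_fiber : {x ∈ ball p r₀ | h x = q} = {x ∈ ball p r | h x = q} := by
    refine Subset.antisymm ?_ fun x hx => ⟨ball_subset_ball hrr₀ hx.1, hx.2⟩
    rintro x ⟨hx, rfl⟩
    exact ⟨by_contra fun hxr => (hch x ⟨ball_subset_closedBall hx, hxr⟩).not_gt hqc, rfl⟩
  exact ⟨q, hqε, hq.mono (ball_subset_ball hrr₀), h_fiber ▸ h_count q hqδ hq⟩

theorem exists_forall_ncard_fiber_eq_of_norm_sub_lt {r : ℝ} (hr : r ≠ 0)
    (hh : AnalyticOnNhd ℂ h (closedBall p r)) (hg : AnalyticOnNhd ℂ g (closedBall p r))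
    (hgh : ∀ x ∈ sphere p r, ‖g x - h x‖ < ‖h x‖) :
    ∃ ε > 0, ∀ q q', ‖q‖ < ε → ‖q'‖ < ε →
      IsRegularValueOn h (ball p r) q → IsRegularValueOn g (ball p r) q' →
      {x ∈ ball p r | h x = q}.ncard = {x ∈ ball p r | g x = q'}.ncard := by
  rw [← frontier_closedBall p hr] at hgh
  have h_encard := eventually_encard_fiber_eq_of_norm_sub_lt (isCompact_closedBall p r) hh hg hgh
  rw [interior_closedBall p hr] at h_encard
  obtain ⟨ε, hε, h_ball⟩ := Metric.eventually_nhds_iff_ball.1 h_encard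
  refine ⟨ε, hε, fun q q' hqε hq'ε hq hq' => ?_⟩
  rw [ncard_def, ncard_def, h_ball (q, q') (by simp [hqε, hq'ε]) hq hq']

theorem HasZeroOrder.congr_isEquivalent (H : HasZeroOrder h p k) (hg : AnalyticAt ℂ g p)
    (hgh : g ~[𝓝 p] h) : HasZeroOrder g p k := by
  have h_exists := H.eventually_exists_ncard_fiber_eq
  obtain ⟨r₀, hr₀, hh, hhp, h_iso, -⟩ := H
  have h_near : ∀ᶠ x in 𝓝 p, x ∈ closedBall p r₀ ∧ AnalyticAt ℂ g x ∧
      ‖g x - h x‖ ≤ 1 / 2 * ‖h x‖ := by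
    filter_upwards [closedBall_mem_nhds p hr₀, hg.eventually_analyticAt,
      hgh.isLittleO.def one_half_pos] with x hx hgx hghx using ⟨hx, hgx, hghx⟩
  obtain ⟨r, h_fiber, h_ball, hr⟩ := (h_exists.and
    (((eventually_closedBall_subset h_near).filter_mono nhdsWithin_le_nhds).and
      self_mem_nhdsWithin)).exists
  choose! hx₀ hg_ball h_close using fun x hx => h_ball (a := x) hx
  have h_rouche : ∀ x ∈ sphere p r, ‖g x - h x‖ < ‖h x‖ := fun x hx => by
    have hx_closed := sphere_subset_closedBall hx
    have hx_ne : h x ≠ 0 := fun hx_zero =>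
      ne_of_mem_sphere hx hr.ne' (h_iso x (hx₀ x hx_closed) hx_zero)
    linarith [h_close x hx_closed, norm_pos_iff.2 hx_ne]
  obtain ⟨ε, hε, h_count⟩ := exists_forall_ncard_fiber_eq_of_norm_sub_lt hr.ne'
    (fun x hx => hh x (hx₀ x hx)) hg_ball h_rouche
  refine ⟨r, hr, hg_ball, ?_, fun x hx hgx => h_iso x (hx₀ x hx) ?_,
    fun _ => exists_norm_lt_isRegularValueOn fun x hx =>
      (hg_ball x (ball_subset_closedBall hx)).differentiableAt,
    ε, hε, fun q' hq'ε hq' => ?_⟩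
  · simpa [hhp] using h_close p (mem_closedBall_self hr.le)
  · have h_half : ‖h x‖ ≤ 1 / 2 * ‖h x‖ := by simpa [hgx] using h_close x hx
    exact norm_le_zero_iff.1 (by linarith)
  · obtain ⟨q, hqε, hq, hqk⟩ := h_fiber ε hε
    exact (h_count q q' hqε hq'ε hq hq').symm.trans hqk

theorem zeroOrder_congr_isEquivalent (hg : AnalyticAt ℂ g p) (hh : AnalyticAt ℂ h p)
    (hgh : g ~[𝓝 p] h) : zeroOrder g p = zeroOrder h p := by
  have h_iff : ∀ k, HasZeroOrder g p k ↔ HasZeroOrder h p k := fun k =>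
    ⟨fun H => H.congr_isEquivalent hh hgh.symm, fun H => H.congr_isEquivalent hg hgh⟩
  simp only [zeroOrder, h_iff]

theorem isRegularValueOn_continuousLinearEquiv_comp_iff (B : Cn n ≃L[ℂ] Cn n) :
    IsRegularValueOn (B ∘ h) s q ↔ IsRegularValueOn h s (B.symm q) := by
  simp only [IsRegularValueOn, B.comp_fderiv, B.eq_symm_apply, Function.comp_apply,
    ContinuousLinearMap.coe_comp, ContinuousLinearEquiv.coe_coe, B.bijective.of_comp_iff']

theorem HasZeroOrder.continuousLinearEquiv_comp (H : HasZeroOrder h p k) (B : Cn n ≃L[ℂ] Cn n) :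
    HasZeroOrder (B ∘ h) p k := by
  obtain ⟨r, hr, hh, hhp, h_iso, -, δ, hδ, h_count⟩ := H
  have hBh : AnalyticOnNhd ℂ (B ∘ h) (closedBall p r) := fun x hx =>
    (B.analyticAt (h x)).comp (hh x hx)
  obtain ⟨ε, hε, hBε⟩ := Metric.eventually_nhds_iff_ball.1
    (B.symm.continuous.tendsto' 0 0 (map_zero _) (ball_mem_nhds 0 hδ))
  refine ⟨r, hr, hBh, by simp [hhp], fun x hx hx_zero => h_iso x hx (by simpa using hx_zero),
    fun _ => exists_norm_lt_isRegularValueOn fun x hx =>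
      (hBh x (ball_subset_closedBall hx)).differentiableAt,
    ε, hε, fun q hqε hq => ?_⟩
  have hq_small : ‖B.symm q‖ < δ := by simpa using hBε q (by simpa using hqε)
  simpa only [Function.comp_apply, B.eq_symm_apply] using
    h_count (B.symm q) hq_small ((isRegularValueOn_continuousLinearEquiv_comp_iff B).1 hq)

theorem zeroOrder_continuousLinearEquiv_comp (B : Cn n ≃L[ℂ] Cn n) :
    zeroOrder (B ∘ h) p = zeroOrder h p := by
  have h_iff : ∀ k, HasZeroOrder (B ∘ h) p k ↔ HasZeroOrder h p k := fun k =>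
    ⟨fun H => by simpa [Function.comp_def] using H.continuousLinearEquiv_comp B.symm,
      fun H => H.continuousLinearEquiv_comp B⟩
  simp only [zeroOrder, h_iff]

end ZeroOrder

section Iterate

theorem isUnit_aeval_of_eval_eigenvalue_ne_zero {K V : Type*} [Field K] [IsAlgClosed K]
    [AddCommGroup V] [Module K V] [FiniteDimensional K V] {A : Module.End K V} {P : K[X]}
    (hP : ∀ μ, A.HasEigenvalue μ → P.eval μ ≠ 0) : IsUnit (aeval A P) := by
  have h_coprime : IsCoprime P (minpoly K A) := by
    refine (isCoprime_iff_aeval_ne_zero_of_isAlgClosed K K P (minpoly K A)).2 fun μ => ?_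
    by_cases hμ : A.HasEigenvalue μ
    · exact .inl (by simpa using hP μ hμ)
    · exact .inr (by simpa [Module.End.hasEigenvalue_iff_isRoot] using hμ)
  obtain ⟨u, v, huv⟩ := h_coprime
  have h_inv : aeval A u * aeval A P = 1 := by simpa using congrArg (aeval A) huv
  exact .of_mul_eq_one_right _ h_inv

theorem isUnit_geom_sum_of_eigenvalues {K V : Type*} [Field K] [IsAlgClosed K]
    [AddCommGroup V] [Module K V] [FiniteDimensional K V] {A : Module.End K V} {m : ℕ}
    (hm : (m : K) ≠ 0) (hA : ∀ μ, A.HasEigenvalue μ → μ = 1 ∨ μ ^ m ≠ 1) :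
    IsUnit (∑ j ∈ Finset.range m, A ^ j) := by
  have h_unit : IsUnit (aeval A (∑ j ∈ Finset.range m, X ^ j : K[X])) := by
    refine isUnit_aeval_of_eval_eigenvalue_ne_zero fun μ hμ h_root => ?_
    have h_sum : ∑ j ∈ Finset.range m, μ ^ j = 0 := by simpa [eval_finsetSum] using h_root
    rcases hA μ hμ with rfl | h_pow
    · simp [hm] at h_sum
    · exact h_pow (sub_eq_zero.1 (by rw [← geom_sum_mul, h_sum, zero_mul]))
  simpa using h_unit

theorem isLittleO_sub_iterate_sub_geom_sum {𝕜 E : Type*} [NontriviallyNormedField 𝕜]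
    [NormedAddCommGroup E] [NormedSpace 𝕜 E] {f : E → E} {f' : E →L[𝕜] E} {a : E}
    (hf : HasStrictFDerivAt f f' a) (ha : f a = a) (m : ℕ) :
    (fun x => (x - f^[m] x) - (∑ j ∈ Finset.range m, f' ^ j) (x - f x)) =o[𝓝 a]
      fun x => x - f x := by
  have h_graph : Tendsto (fun x => (x, f x)) (𝓝 a) (𝓝 (a, a)) :=
    tendsto_id.prodMk_nhds (by simpa only [ha] using hf.continuousAt.tendsto)
  have h_term : ∀ j ∈ Finset.range m,
      (fun x => f^[j] x - f^[j] (f x) - (f' ^ j) (x - f x)) =o[𝓝 a] fun x => x - f x :=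
    fun j _ => (hf.iterate ha j).isLittleO.comp_tendsto h_graph
  refine (IsLittleO.sum h_term).congr_left fun x => ?_
  have h_telescope : ∑ j ∈ Finset.range m, (f^[j] x - f^[j] (f x)) = x - f^[m] x :=
    Finset.sum_range_sub' (fun j => f^[j] x) m
  simp [Finset.sum_sub_distrib, ← h_telescope]

theorem analyticAt_iterate {𝕜 E : Type*} [NontriviallyNormedField 𝕜] [NormedAddCommGroup E]
    [NormedSpace 𝕜 E] {f : E → E} {a : E} (hf : AnalyticAt 𝕜 f a) (ha : f a = a) (m : ℕ) :
    AnalyticAt 𝕜 (f^[m]) a := by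
  induction m with
  | zero => exact analyticAt_id
  | succ m ih =>
    rw [Function.iterate_succ']
    exact hf.comp_of_eq ih (Function.iterate_fixed ha m)

theorem exists_sub_iterate_isEquivalent {𝕜 E : Type*} [NontriviallyNormedField 𝕜]
    [CompleteSpace 𝕜] [IsAlgClosed 𝕜] [NormedAddCommGroup E] [NormedSpace 𝕜 E]
    [FiniteDimensional 𝕜 E] {f : E → E} {f' : E →L[𝕜] E} {a : E} {m : ℕ}
    (hf : HasStrictFDerivAt f f' a) (ha : f a = a) (hm : (m : 𝕜) ≠ 0)
    (hf' : ∀ μ, Module.End.HasEigenvalue f'.toLinearMap μ → μ = 1 ∨ μ ^ m ≠ 1) :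
    ∃ B : E ≃L[𝕜] E, (fun x => x - f^[m] x) ~[𝓝 a] fun x => B (x - f x) := by
  have : CompleteSpace E := FiniteDimensional.complete 𝕜 E
  have h_unit : IsUnit (∑ j ∈ Finset.range m, f' ^ j) := by
    rw [ContinuousLinearMap.isUnit_iff_isUnit_toLinearMap]
    simpa using isUnit_geom_sum_of_eigenvalues hm hf'
  refine ⟨.ofUnit h_unit.unit, ?_⟩
  exact (isLittleO_sub_iterate_sub_geom_sum hf ha m).trans_isBigO
    (ContinuousLinearEquiv.isBigO_comp_rev (.ofUnit h_unit.unit) _ _)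

end Iterate

theorem index_eq_index_iterate_of_eigenvalues_general {m : ℕ} (hm : m ≠ 0)
    (f : Cn n → Cn n) (hf : IsGerm f)
    (hiso : IsolatedFixedPtAt0 f)
    (heig : ∀ lam : ℂ, Module.End.HasEigenvalue ((fderiv ℂ f 0).toLinearMap) lam →
      lam = 1 ∨ lam ^ m ≠ 1) :
    IsolatedFixedPtAt0 (f^[m]) ∧ fixedPointIndex f 0 = fixedPointIndex (f^[m]) 0 := by
  obtain ⟨B, hB⟩ := exists_sub_iterate_isEquivalent hf.1.hasStrictFDerivAt hf.2
    (Nat.cast_ne_zero.2 hm) heig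
  have h_sub : AnalyticAt ℂ (fun x => x - f x) 0 := analyticAt_id.sub hf.1
  have h_sub_iterate : AnalyticAt ℂ (fun x => x - f^[m] x) 0 :=
    analyticAt_id.sub (analyticAt_iterate hf.1 hf.2 m)
  refine ⟨⟨Function.iterate_fixed hf.2 m, ?_⟩, ?_⟩
  · filter_upwards [hiso.2, nhdsWithin_le_nhds hB.symm.isBigO.eq_zero_imp] with x hx h_zero h_fixed
    have hBx : B (x - f x) = 0 := h_zero (by simp [h_fixed])
    exact hx (sub_eq_zero.1 (B.map_eq_zero_iff.1 hBx)).symm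
  · calc zeroOrder (fun x => x - f x) 0 = zeroOrder (fun x => B (x - f x)) 0 :=
          (zeroOrder_continuousLinearEquiv_comp B).symm
      _ = zeroOrder (fun x => x - f^[m] x) 0 :=
          (zeroOrder_congr_isEquivalent h_sub_iterate ((B.analyticAt _).comp h_sub) hB).symm

/-- Shub–Sullivan: if `0` is an isolated fixed point of `f` and every eigenvalue `λ` of
`Df(0)` satisfies `λ = 1` or `λ^m ≠ 1`, then `0` is an isolated fixed point of `f^m`
and `μ_f(0) = μ_{f^m}(0)`. -/
theorem index_eq_index_iterate_of_eigenvalues (m : ℕ) (hm : 1 < m)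
    (f : Cn 2 → Cn 2) (hf : IsGerm f)
    (hiso : IsolatedFixedPtAt0 f)
    (heig : ∀ lam : ℂ, Module.End.HasEigenvalue ((fderiv ℂ f 0).toLinearMap) lam →
      lam = 1 ∨ lam ^ m ≠ 1) :
    IsolatedFixedPtAt0 (f^[m]) ∧ fixedPointIndex f 0 = fixedPointIndex (f^[m]) 0 :=
  index_eq_index_iterate_of_eigenvalues_general (by omega) f hf hiso heig

end ZhangPaper
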